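/- Let S be a stream of N items, let 1/N ≤ ε < φ ≤ 1, and run the Misra-Gries algorithm with capacity k = ⌈1/ε⌉ on S, producing final table C. Then reporting exactly those items x with C[x] > (φ − ε)N solves the (ε, φ)-heavy hitters problem: every item x with f_x ≥ φN is reported, and no item x with f_x ≤ (φ − ε)N is reported. -/

import Mathlib

/-!
Misra-Gries solves the `(ε, φ)`-heavy hitters problem: report exactly the items
whose final count exceeds `(φ − ε)·N`.
-/

/-- One step of the Misra-Gries algorithm with capacity `k`. -/
def mgStep {U : Type*} [Fintype U] [DecidableEq U] (k : ℕ) (C : U → ℕ) (a : U) : U → ℕ :=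
  if 0 < C a then
    Function.update C a (C a + 1)
  else if (Finset.univ.filter fun y => 0 < C y).card < k then
    Function.update C a 1
  else
    fun y => C y - 1

/-- Running Misra-Gries with capacity `k` on the stream `S`, starting from the
all-zero table. -/
def mgRun {U : Type*} [Fintype U] [DecidableEq U] (k : ℕ) (S : List U) : U → ℕ :=
  S.foldl (mgStep k) fun _ => 0

/-!
A decrement step destroys at least `k + 1` occurrences at once: each of the at least `k` positive
counters loses one, and the arriving item is discarded. A given item accounts for at most one of
them, so it is undercounted by at most `(N - ∑ y, C y) / (k + 1)`, which is less than `εN` as soon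
as `1 < ε * (k + 1)`.
-/

theorem sum_tsub_one_add_card_filter_pos {ι : Type*} (s : Finset ι) (f : ι → ℕ) :
    ∑ i ∈ s, (f i - 1) + (s.filter fun i => 0 < f i).card = ∑ i ∈ s, f i := by
  rw [Finset.card_filter, ← Finset.sum_add_distrib]
  refine Finset.sum_congr rfl fun i _ => ?_
  split_ifs <;> omega

theorem one_lt_mul_natCeil_one_div_add_one {ε : ℝ} (hε : 0 < ε) :
    1 < ε * (⌈1 / ε⌉₊ + 1) :=
  (div_lt_iff₀' hε).mp ((Nat.le_ceil _).trans_lt (lt_add_one _))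

section MisraGries

variable {U : Type*} [Fintype U] [DecidableEq U]

theorem mgStep_eq_add_count_or_eq_tsub_one (k : ℕ) (C : U → ℕ) (a : U) :
    (∀ x, mgStep k C a x = C x + [a].count x) ∨
      C a = 0 ∧ k ≤ (Finset.univ.filter fun y => 0 < C y).card ∧
        ∀ x, mgStep k C a x = C x - 1 := by
  have update_succ (x : U) : Function.update C a (C a + 1) x = C x + [a].count x := by
    obtain rfl | hx := eq_or_ne x a
    · simp
    · simp [hx, hx.symm]
  unfold mgStep
  split_ifs with hpos hcard
  · exact .inl update_succ
  · rw [Nat.eq_zero_of_not_pos hpos] at update_succ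
    exact .inl update_succ
  · exact .inr ⟨Nat.eq_zero_of_not_pos hpos, not_lt.mp hcard, fun _ => rfl⟩

theorem mgStep_le_add_count (k : ℕ) (C : U → ℕ) (a x : U) :
    mgStep k C a x ≤ C x + [a].count x := by
  obtain h | ⟨-, -, h⟩ := mgStep_eq_add_count_or_eq_tsub_one k C a
  · exact (h x).le
  · exact (h x).trans_le ((Nat.sub_le _ _).trans (Nat.le_add_right _ _))

theorem mul_add_count_add_sum_mgStep_le (k : ℕ) (C : U → ℕ) (a x : U) :
    (k + 1) * (C x + [a].count x) + ∑ y, mgStep k C a y ≤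
      (k + 1) * mgStep k C a x + ∑ y, C y + 1 := by
  obtain h | ⟨ha, hk, h⟩ := mgStep_eq_add_count_or_eq_tsub_one k C a
  · simp [h, Finset.sum_add_distrib, List.count_singleton, add_assoc]
  · have loss_le_one : C x + [a].count x ≤ C x - 1 + 1 := by
      obtain rfl | hx := eq_or_ne x a
      · simp [ha]
      · rw [List.count_singleton, if_neg (by simpa using hx.symm)]
        omega
    have sum_loss : ∑ y, (C y - 1) + k ≤ ∑ y, C y :=
      (Nat.add_le_add_left hk _).trans_eq (sum_tsub_one_add_card_filter_pos Finset.univ C)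
    simp only [h]
    calc (k + 1) * (C x + [a].count x) + ∑ y, (C y - 1)
        ≤ (k + 1) * (C x - 1 + 1) + ∑ y, (C y - 1) := by gcongr
      _ = (k + 1) * (C x - 1) + (∑ y, (C y - 1) + k) + 1 := by ring
      _ ≤ (k + 1) * (C x - 1) + ∑ y, C y + 1 := by gcongr

theorem mgRun_append_singleton (k : ℕ) (S : List U) (a : U) :
    mgRun k (S ++ [a]) = mgStep k (mgRun k S) a :=
  List.foldl_concat ..

theorem mgRun_le_count (k : ℕ) (S : List U) (x : U) : mgRun k S x ≤ S.count x := by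
  induction S using List.reverseRecOn with
  | nil => exact le_rfl
  | append_singleton S a ih =>
    rw [mgRun_append_singleton, List.count_append]
    exact (mgStep_le_add_count k (mgRun k S) a x).trans (Nat.add_le_add_right ih _)

theorem mul_count_add_sum_mgRun_le (k : ℕ) (S : List U) (x : U) :
    (k + 1) * S.count x + ∑ y, mgRun k S y ≤ (k + 1) * mgRun k S x + S.length := by
  induction S using List.reverseRecOn with
  | nil => simp [mgRun]
  | append_singleton S a ih =>
    have step_bound := mul_add_count_add_sum_mgStep_le k (mgRun k S) a x
    rw [mul_add] at step_bound
    rw [mgRun_append_singleton, List.count_append, List.length_append, List.length_singleton,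
      mul_add]
    omega

theorem count_lt_mgRun_add_mul_length {S : List U} (hS : 0 < S.length) {ε : ℝ} {k : ℕ}
    (hk : 1 < ε * (k + 1)) (x : U) : (S.count x : ℝ) < mgRun k S x + ε * S.length := by
  have mul_count_le : ((k : ℝ) + 1) * S.count x ≤ (k + 1) * mgRun k S x + S.length := by
    exact_mod_cast le_of_add_le_left (mul_count_add_sum_mgRun_le k S x)
  refine lt_of_mul_lt_mul_left ?_ (by positivity : (0 : ℝ) ≤ k + 1)
  calc ((k : ℝ) + 1) * S.count x
      ≤ (k + 1) * mgRun k S x + 1 * S.length := by rwa [one_mul]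
    _ < (k + 1) * mgRun k S x + ε * (k + 1) * S.length := by gcongr
    _ = (k + 1) * (mgRun k S x + ε * S.length) := by ring

theorem misraGries_heavyHitters_general {S : List U} (hS : 0 < S.length) {ε : ℝ} (φ : ℝ) {k : ℕ}
    (hk : 1 < ε * (k + 1)) (x : U) :
    (φ * (S.length : ℝ) ≤ (S.count x : ℝ) →
        (φ - ε) * (S.length : ℝ) < (mgRun k S x : ℝ)) ∧
      ((S.count x : ℝ) ≤ (φ - ε) * (S.length : ℝ) →
        ¬ ((φ - ε) * (S.length : ℝ) < (mgRun k S x : ℝ))) := by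
  have mgRun_le : (mgRun k S x : ℝ) ≤ S.count x := by exact_mod_cast mgRun_le_count k S x
  refine ⟨fun heavy => ?_, fun light => (mgRun_le.trans light).not_gt⟩
  rw [sub_mul, sub_lt_iff_lt_add]
  exact heavy.trans_lt (count_lt_mgRun_add_mul_length hS hk x)

end MisraGries

/-- Let `1/N ≤ ε < φ ≤ 1` and run Misra-Gries with capacity
`k = ⌈1/ε⌉` on a stream `S` of `N` items, producing final table `C`. Reporting
exactly the items `x` with `C[x] > (φ − ε)N` solves the `(ε, φ)`-heavy hitters
problem: every item with `f_x ≥ φN` is reported, and no item with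
`f_x ≤ (φ − ε)N` is reported. -/
theorem misraGries_heavyHitters {U : Type*} [Fintype U] [DecidableEq U]
    (S : List U) (hN : 0 < S.length) (ε φ : ℝ)
    (hε₁ : 1 / (S.length : ℝ) ≤ ε) (hεφ : ε < φ) (hφ : φ ≤ 1)
    (k : ℕ) (hk : k = ⌈1 / ε⌉₊) :
    ∀ x : U,
      (φ * (S.length : ℝ) ≤ (S.count x : ℝ) →
        (φ - ε) * (S.length : ℝ) < (mgRun k S x : ℝ)) ∧
      ((S.count x : ℝ) ≤ (φ - ε) * (S.length : ℝ) →
        ¬ ((φ - ε) * (S.length : ℝ) < (mgRun k S x : ℝ))) := by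
  subst hk
  have hε : 0 < ε := lt_of_lt_of_le (by positivity) hε₁
  exact misraGries_heavyHitters_general hN φ (one_lt_mul_natCeil_one_div_add_one hε)
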